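/- Fix an odd integer c ≥ 5 and relator words R_x ∈ {x³, x³·s_c⁻¹}, R_y ∈ {y³·s₃⁻²·s₄⁻¹, y³·s₃⁻²·s₄⁻¹·s_c⁻¹, y³·s₃⁻²·s₄⁻¹·s_c⁻²}, and let G = G_Q(c, R_x, R_y). Then G admits an automorphism σ with σ ∘ σ = id and σ ≠ id which acts as inversion on the quotient of G by the subgroup generated by all cubes and all commutators; that is, for every g ∈ G, the element σ(g)·g lies in the (normal) subgroup of G generated by {h³ : h ∈ G} together with the commutator subgroup [G,G]. -/

import Mathlib

/-- The commutator `[g,h] = g⁻¹h⁻¹gh`. -/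
def fcomm {G : Type*} [Group G] (g h : G) : G := g⁻¹ * h⁻¹ * g * h

namespace GQdef

/-- The generator `x` (as a word in the free group). -/
def xw : FreeGroup ℕ := FreeGroup.of 0

/-- The generator `y`. -/
def yw : FreeGroup ℕ := FreeGroup.of 1

/-- The generator `t₃`. -/
def t3w : FreeGroup ℕ := FreeGroup.of 2

/-- The generator `s_j` (meaningful for `2 ≤ j ≤ c`). -/
def sw (j : ℕ) : FreeGroup ℕ := FreeGroup.of (j + 1)

/-- The defining relators of `G_Q(c, R_x, R_y)`:
`s₂ = [y,x]`, `t₃ = [s₂,y]`, `s_j = [s_{j−1},x]` for `3 ≤ j ≤ c`,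
`s_j³ = s_{j+2}²·s_{j+3}` for `2 ≤ j ≤ c−3`, `s_{c−2}³ = s_c²`, `t₃³ = 1`,
`R_x = 1`, `R_y = 1`.  (The superfluous generators `FreeGroup.of n` with
`n ≥ c+2` are killed, so that the effective generators are exactly
`x, y, t₃, s₂, …, s_c`.) -/
def rels (c : ℕ) (Rx Ry : FreeGroup ℕ) : Set (FreeGroup ℕ) :=
  {sw 2 * (fcomm yw xw)⁻¹, t3w * (fcomm (sw 2) yw)⁻¹, t3w ^ 3,
    sw (c - 2) ^ 3 * (sw c ^ 2)⁻¹, Rx, Ry} ∪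
  {w | ∃ j : ℕ, 3 ≤ j ∧ j ≤ c ∧ w = sw j * (fcomm (sw (j - 1)) xw)⁻¹} ∪
  {w | ∃ j : ℕ, 2 ≤ j ∧ j ≤ c - 3 ∧ w = sw j ^ 3 * (sw (j + 2) ^ 2 * sw (j + 3))⁻¹} ∪
  {w | ∃ n : ℕ, c + 2 ≤ n ∧ w = FreeGroup.of n}

/-- The group `G_Q(c, R_x, R_y)`. -/
abbrev GQ (c : ℕ) (Rx Ry : FreeGroup ℕ) : Type := PresentedGroup (rels c Rx Ry)

/-- The two admissible relator words `R_x ∈ {x³, x³·s_c⁻¹}`. -/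
def RxSet (c : ℕ) : Set (FreeGroup ℕ) := {xw ^ 3, xw ^ 3 * (sw c)⁻¹}

/-- The three admissible relator words
`R_y ∈ {y³·s₃⁻²·s₄⁻¹, y³·s₃⁻²·s₄⁻¹·s_c⁻¹, y³·s₃⁻²·s₄⁻¹·s_c⁻²}`. -/
def RySet (c : ℕ) : Set (FreeGroup ℕ) :=
  {yw ^ 3 * (sw 3 ^ 2)⁻¹ * (sw 4)⁻¹,
   yw ^ 3 * (sw 3 ^ 2)⁻¹ * (sw 4)⁻¹ * (sw c)⁻¹,
   yw ^ 3 * (sw 3 ^ 2)⁻¹ * (sw 4)⁻¹ * (sw c ^ 2)⁻¹}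

end GQdef

open GQdef

/-!
By von Dyck's theorem it suffices that `x⁻¹, y⁻¹` satisfy the relations imposed on `x, y`. Let `φ`
be conjugation by `x`.

* `x³` is central; only the case `x³ = s_c` needs an argument. The relation
  `s_j³ = s_{j+2} φ(s_{j+2})` makes the commutator of `s_j` and `φ(s_j)` central in the group they
  generate, so their suitable odd powers multiply as if they commuted. Descending from
  `s_{c-2}³ = s_c²` in steps of two, which for odd `c` ends at `s₃`, and then using `R_y`, one finds
  `y ^ 3ⁿ = (x³) ^ 2ⁿ` for some `n`. As `x⁹ = 1`, this makes `x³` a power of `y`.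
* The `s_j` commute. Now `φ³ = 1`, so `s_j φ(s_j) φ²(s_j) = 1` for `j ≥ 2`; together with the cube
  relations this lifts commutation of `s_j` with `φ(s_j)` from `j + 1` to `j`. Once they commute,
  the norm relations in turn imply all the cube relations.
* By `R_y`, `y` then commutes with `s₃, s₄, …`, and `t₃` is central.

Hence replacing `x, y` by their inverses turns `s_j` into `φ ^ (1 - j)` of `s_j` or of its inverse,
according to the parity of `j`, up to a central factor `t₃⁻¹` for `j = 2`; in particular `s_c` is
inverted since `c` is odd, which is what `R_x` and `R_y` require.
-/

section ClassTwo

open scoped commutatorElement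

variable {G : Type*} [Group G] {a b c : G}

theorem pow_mul_pow_eq_commutator_pow_mul (ha : Commute ⁅a, b⁆ a) (hb : Commute ⁅a, b⁆ b) (n : ℕ) :
    a ^ n * b ^ n = ⁅a, b⁆ ^ n.choose 2 * (a * b) ^ n := by
  induction n with
  | zero => simp
  | succ n ih =>
    have hswap : ⁅a, b⁆ ^ n * b ^ n * a = a * b ^ n := by
      rw [← hb.mul_pow, ← eq_mul_inv_iff_mul_eq, ← conj_pow]
      simp [commutatorElement_def]
    calc a ^ (n + 1) * b ^ (n + 1) = a ^ n * (a * b ^ n) * b := by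
          simp only [pow_succ, mul_assoc]
      _ = ⁅a, b⁆ ^ n * (a ^ n * b ^ n) * (a * b) := by
          rw [← hswap, mul_assoc _ (b ^ n), ← mul_assoc (a ^ n), ← (ha.pow_pow n n).eq]
          simp only [mul_assoc]
      _ = ⁅a, b⁆ ^ (n + 1).choose 2 * (a * b) ^ (n + 1) := by
          rw [ih, Nat.choose_succ_succ' n 1, Nat.choose_one_right, pow_add, pow_succ (a * b)]
          simp only [mul_assoc]

theorem commutator_pow_eq_one (ha : Commute ⁅a, b⁆ a) {n : ℕ} (h : Commute (a ^ n) b) :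
    ⁅a, b⁆ ^ n = 1 := by
  have hconj : (⁅a, b⁆⁻¹ * a) ^ n = a ^ n := by
    rw [show ⁅a, b⁆⁻¹ * a = b * a * b⁻¹ by simp [commutatorElement_def, mul_assoc], conj_pow,
      ← h.eq, mul_inv_cancel_right]
  rwa [ha.inv_left.mul_pow, mul_eq_right, inv_pow, inv_eq_one] at hconj

theorem mul_pow_of_commute_commutator (ha : Commute ⁅a, b⁆ a) (hb : Commute ⁅a, b⁆ b) {n : ℕ}
    (hn : Odd n) (h : Commute (a ^ n) b) : (a * b) ^ n = a ^ n * b ^ n := by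
  obtain ⟨k, hk⟩ : n ∣ n.choose 2 := by
    obtain ⟨k, rfl⟩ := hn
    exact ⟨k, by rw [Nat.choose_two_right, Nat.add_sub_cancel, mul_left_comm,
      Nat.mul_div_cancel_left _ two_pos]⟩
  rw [pow_mul_pow_eq_commutator_pow_mul ha hb, hk, pow_mul, commutator_pow_eq_one ha h, one_pow,
    one_mul]

theorem commute_commutator_of_cyclic (h₁ : b * a ^ 2 * c = a) (h₂ : c * b ^ 2 * a = b)
    (h₃ : a * c ^ 2 * b = c) : Commute ⁅a, b⁆ a ∧ Commute ⁅a, b⁆ b := by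
  obtain rfl : c = (a ^ 2)⁻¹ * b⁻¹ * a := by
    rw [← mul_inv_rev, eq_inv_mul_iff_mul_eq, h₁]
  have hconj : Commute (a * b * a⁻¹) b := by
    have : (a * b * a⁻¹)⁻¹ * b⁻¹ * (a * b * a⁻¹) = b⁻¹ := by
      simpa [pow_two, mul_assoc] using congrArg (fun g => a * (a * (g * a⁻¹))) h₃
    rwa [← Commute.inv_right_iff, commute_iff_eq, eq_comm, ← inv_mul_eq_iff_eq_mul, ← mul_assoc]
  have hba : Commute (a * b) (b * a) := by
    simpa [commute_iff_eq, pow_two, mul_assoc] using congrArg (fun g => b * (a * (a * g))) h₂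
  have hb : Commute ⁅a, b⁆ b := hconj.mul_left (Commute.refl b).inv_left
  have hmul : Commute ⁅a, b⁆ (b * a) := by
    rw [show ⁅a, b⁆ = a * b * (b * a)⁻¹ by simp [commutatorElement_def, mul_assoc]]
    exact hba.mul_left (Commute.refl _).inv_left
  exact ⟨by simpa using hb.inv_right.mul_right hmul, hb⟩

theorem commute_sq_of_mul_sq_mul (h₀ : a * b * c = 1) (h : b * a ^ 2 * c = a) :
    Commute (a ^ 2) b := by
  obtain rfl := eq_inv_of_mul_eq_one_right h₀
  have := mul_inv_eq_iff_eq_mul.mp h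
  rw [commute_iff_eq, this, pow_two, mul_assoc]

theorem commute_of_commute_inv_mul (h₀ : a * b * c = 1) (hb : Commute (b ^ 2) c)
    (h : Commute (a⁻¹ * b) (b⁻¹ * c)) : Commute a b := by
  obtain rfl : a = (b * c)⁻¹ := eq_inv_of_mul_eq_one_left (by rwa [← mul_assoc])
  have hcancel : c * b * (b * c) = c * b * (c * b) := by
    calc c * b * (b * c) = b ^ 2 * c * c := by rw [hb.eq, pow_two]; simp only [mul_assoc]
      _ = b * ((b * c)⁻¹⁻¹ * b * (b⁻¹ * c)) := by simp [pow_two, mul_assoc]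
      _ = c * b * (c * b) := by rw [h.eq]; simp [mul_assoc]
  have hbc : Commute b c := mul_left_cancel hcancel
  exact ((Commute.refl b).mul_left hbc.symm).inv_left

theorem inv_mul_inv_mul_eq_inv_cube (h₀ : a * b * c = 1) (hb : Commute (b ^ 2) c) :
    (a⁻¹ * b)⁻¹ * (b⁻¹ * c) = (b ^ 3)⁻¹ := by
  obtain rfl : a = (b * c)⁻¹ := eq_inv_of_mul_eq_one_left (by rwa [← mul_assoc])
  calc ((b * c)⁻¹⁻¹ * b)⁻¹ * (b⁻¹ * c) = b⁻¹ * (c⁻¹ * ((b ^ 2)⁻¹ * c)) := by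
        simp [pow_two, mul_assoc]
    _ = (b ^ 3)⁻¹ := by rw [hb.inv_left.eq, inv_mul_cancel_left, ← mul_inv_rev, ← pow_succ]

theorem commute_of_inv_mul_cube (h₀ : a * b * c = 1) (hab : Commute (a ^ 2) b)
    (hbc : Commute (b ^ 2) c) (hca : Commute (c ^ 2) a)
    (h : (a⁻¹ * b) ^ 3 = (b ^ 3 * (c ^ 3)⁻¹) ^ 2) : Commute a b := by
  have ha : a⁻¹ = b * c := inv_eq_of_mul_eq_one_right (by rwa [← mul_assoc])
  have hc : c = b⁻¹ * a⁻¹ := by rw [← mul_inv_rev, eq_inv_of_mul_eq_one_right h₀]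
  have haa : Commute (a ^ 2) a := (Commute.refl a).pow_left 2
  have hba : Commute (b ^ 2) a := by
    simpa [← ha] using ((Commute.refl b).pow_left 2).mul_right hbc
  have hac : Commute (a ^ 2) c := hc ▸ hab.inv_right.mul_right haa.inv_right
  have hcube : Commute ((a⁻¹ * b) ^ 3) a := by
    have hsplit : b ^ 3 * (c ^ 3)⁻¹ = b ^ 2 * a⁻¹ * (c ^ 2 * c ^ 2)⁻¹ := by
      rw [ha]
      group
    rw [h, hsplit]
    exact ((hba.mul_left (Commute.refl a).inv_left).mul_left (hca.mul_left hca).inv_left).pow_left 2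
  have hsq : Commute ((a⁻¹ * b) ^ 2) a := by
    have hsplit : a⁻¹ * b = (c * a ^ 2)⁻¹ := by simp [hc, pow_two, mul_assoc]
    rw [hsplit, inv_pow, hac.symm.mul_pow]
    exact (hca.mul_left (haa.pow_left 2)).inv_left
  have hdiv : Commute (a⁻¹ * b) a := by
    simpa only [pow_succ (a⁻¹ * b) 2, inv_mul_cancel_left] using hsq.inv_left.mul_left hcube
  simpa using ((Commute.refl a).mul_left hdiv).symm

end ClassTwo

section CommSeq

variable {G H : Type*} [Group G] [Group H]

/-- The iterated commutators `y, [y,x], [[y,x],x], …`; in the notation of the presentation,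
`commSeq x y n` is `s_{n+1}` for `n ≥ 1`. -/
def commSeq (x y : G) : ℕ → G
  | 0 => y
  | n + 1 => fcomm (commSeq x y n) x

theorem map_fcomm (f : G →* H) (g h : G) : f (fcomm g h) = fcomm (f g) (f h) := by
  simp [fcomm]

theorem map_commSeq (f : G →* H) (x y : G) (n : ℕ) :
    f (commSeq x y n) = commSeq (f x) (f y) n := by
  induction n with
  | zero => rfl
  | succ n ih => rw [commSeq, map_fcomm, ih, commSeq]

theorem fcomm_eq_one_iff {g h : G} : fcomm g h = 1 ↔ Commute g h := by
  rw [fcomm, mul_assoc, ← mul_inv_rev, inv_mul_eq_one, eq_comm, commute_iff_eq]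

/-- Conjugation `g ↦ x⁻¹ g x`, so that `fcomm g x = g⁻¹ * rightConj x g`. -/
def rightConj (x : G) : MulAut G := MulAut.conj x⁻¹

theorem rightConj_apply (x g : G) : rightConj x g = x⁻¹ * g * x := by
  simp [rightConj]

theorem fcomm_eq_inv_mul_rightConj (g x : G) : fcomm g x = g⁻¹ * rightConj x g := by
  simp only [fcomm, rightConj_apply, mul_assoc]

theorem rightConj_eq_self {g x : G} (h : Commute g x) : rightConj x g = g := by
  rw [rightConj_apply, mul_assoc, h.eq, inv_mul_cancel_left]

theorem rightConj_iterate_three (x g : G) :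
    rightConj x (rightConj x (rightConj x g)) = rightConj (x ^ 3) g := by
  simp only [rightConj_apply, pow_succ, pow_zero, one_mul, mul_inv_rev, mul_assoc]

theorem rightConj_rightConj_rightConj {g x : G} (h : Commute (x ^ 3) g) :
    rightConj x (rightConj x (rightConj x g)) = g := by
  rw [rightConj_iterate_three, rightConj_eq_self h.symm]

variable {x y : G}

theorem commSeq_succ (x y : G) (n : ℕ) :
    commSeq x y (n + 1) = (commSeq x y n)⁻¹ * rightConj x (commSeq x y n) :=
  fcomm_eq_inv_mul_rightConj ..

theorem rightConj_commSeq (x y : G) (n : ℕ) :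
    rightConj x (commSeq x y n) = commSeq x y n * commSeq x y (n + 1) := by
  rw [commSeq_succ, mul_inv_cancel_left]

theorem commute_commSeq {g : G} (hx : Commute g x) (hy : Commute g y) (n : ℕ) :
    Commute g (commSeq x y n) := by
  induction n with
  | zero => exact hy
  | succ n ih => exact ((ih.inv_right.mul_right hx.inv_right).mul_right ih).mul_right hx

theorem commute_pow_commSeq {k : ℕ} (h : Commute (x ^ k) y) (n : ℕ) :
    Commute (x ^ k) (commSeq x y n) :=
  commute_commSeq ((Commute.refl x).pow_left k) h n

theorem commSeq_succ_norm {n : ℕ} (h : Commute (x ^ 3) (commSeq x y n)) :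
    commSeq x y (n + 1) * rightConj x (commSeq x y (n + 1)) *
      rightConj x (rightConj x (commSeq x y (n + 1))) = 1 := by
  simp only [commSeq_succ, map_mul, map_inv, rightConj_rightConj_rightConj h, mul_assoc,
    mul_inv_cancel_left, inv_mul_cancel]

theorem cube_eq_mul_rightConj {i : ℕ}
    (hcube : commSeq x y i ^ 3 = commSeq x y (i + 2) ^ 2 * commSeq x y (i + 3)) :
    commSeq x y i ^ 3 = commSeq x y (i + 2) * rightConj x (commSeq x y (i + 2)) := by
  rw [hcube, rightConj_commSeq, pow_two, mul_assoc]

theorem cyclic_rel_of_cube {i : ℕ}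
    (hcube : commSeq x y i ^ 3 = commSeq x y (i + 2) ^ 2 * commSeq x y (i + 3))
    (hx : Commute (x ^ 3) (commSeq x y i)) :
    rightConj x (commSeq x y i) * commSeq x y i ^ 2 *
      rightConj x (rightConj x (commSeq x y i)) = commSeq x y i := by
  have h := cube_eq_mul_rightConj hcube
  simp only [commSeq_succ x y (i + 1), commSeq_succ x y i, map_mul, map_inv,
    rightConj_rightConj_rightConj hx] at h
  generalize commSeq x y i = a at *
  generalize rightConj x a = b at *
  generalize rightConj x b = c at *
  have hsq : a * a = b⁻¹ * a * c⁻¹ :=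
    mul_right_cancel (b := a) (by simpa [pow_succ, mul_assoc] using h)
  rw [pow_two, hsq]
  simp [mul_assoc]

end CommSeq

section CyclicTriple

variable {G : Type*} [Group G] {x a : G}

theorem mul_rightConj_pow (hx : Commute (x ^ 3) a)
    (h : rightConj x a * a ^ 2 * rightConj x (rightConj x a) = a) {n : ℕ} (hn : Odd n)
    (ha : Commute (a ^ n) (rightConj x a)) :
    (a * rightConj x a) ^ n = a ^ n * rightConj x (a ^ n) := by
  have h' := congrArg (rightConj x) h
  have h'' := congrArg (rightConj x) h'
  simp only [map_mul, map_pow, rightConj_rightConj_rightConj hx] at h' h''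
  obtain ⟨hua, hub⟩ := commute_commutator_of_cyclic h h' h''
  rw [mul_pow_of_commute_commutator hua hub hn ha, map_pow]

end CyclicTriple

/-- The defining relations of `G_Q(c, R_x, R_y)` imposed on a pair of group elements, where
`c = m + 5` and `e`, `k` are the exponents of `s_c` in `R_x` and `R_y`. -/
structure IsGQ {G : Type*} [Group G] (m e k : ℕ) (x y : G) : Prop where
  cube : ∀ i ≤ m, commSeq x y (i + 1) ^ 3 = commSeq x y (i + 3) ^ 2 * commSeq x y (i + 4)
  top : commSeq x y (m + 2) ^ 3 = commSeq x y (m + 4) ^ 2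
  third : fcomm (commSeq x y 1) y ^ 3 = 1
  x_cube : x ^ 3 = commSeq x y (m + 4) ^ e
  y_cube : y ^ 3 = commSeq x y (m + 4) ^ k * commSeq x y 3 * commSeq x y 2 ^ 2

section CentralCube

variable {G : Type*} [Group G] {x y g : G} {m e k : ℕ}

theorem cube_cube_eq_one (hx : fcomm (fcomm g x) x = x ^ 3) (hg : g ^ 3 = (x ^ 3) ^ 2) :
    (x ^ 3) ^ 3 = 1 := by
  have hxx : Commute (x ^ 3) x := (Commute.refl x).pow_left 3
  have hcomm : Commute ((x ^ 3) ^ 2) (fcomm g x) :=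
    commute_commSeq (hxx.pow_left 2) (hg ▸ (Commute.refl g).pow_left 3) 1
  generalize fcomm g x = w at *
  have hw : rightConj x w = w * x ^ 3 := by
    rw [← hx, fcomm_eq_inv_mul_rightConj, mul_inv_cancel_left]
  have hiter := rightConj_iterate_three x w
  simp only [hw, map_mul, rightConj_eq_self hxx, rightConj_apply (x ^ 3)] at hiter
  generalize x ^ 3 = z at *
  have h : z * w * z ^ 2 = w :=
    mul_right_cancel (b := z) (by simpa [pow_two, mul_assoc, eq_inv_mul_iff_mul_eq] using hiter)
  rwa [mul_assoc, ← hcomm.eq, ← mul_assoc, ← pow_succ', mul_eq_right] at h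

theorem commute_of_pow_eq_pow_two_pow {z : G} (hz : z ^ 3 = 1) {n r : ℕ}
    (h : g ^ n = z ^ 2 ^ r) : Commute z g := by
  have hcop : (2 ^ r).Coprime (orderOf z) :=
    .coprime_dvd_right (orderOf_dvd_of_pow_eq_one hz) (.pow_left r (by decide))
  obtain ⟨j, hj⟩ := exists_pow_eq_self_of_coprime hcop
  rw [← hj, ← h]
  exact ((Commute.refl g).pow_left n).pow_left j

theorem mul_rightConj_pow_eq {i n r : ℕ} (hz : (x ^ 3) ^ 3 = 1)
    (hcube : commSeq x y i ^ 3 = commSeq x y (i + 2) ^ 2 * commSeq x y (i + 3)) (hn : Odd n)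
    (h : commSeq x y i ^ n = (x ^ 3) ^ 2 ^ r) :
    (commSeq x y i * rightConj x (commSeq x y i)) ^ n = (x ^ 3) ^ 2 ^ (r + 1) := by
  have hzi : Commute (x ^ 3) (commSeq x y i) := commute_of_pow_eq_pow_two_pow hz h
  have hzx : Commute (x ^ 3) x := (Commute.refl x).pow_left 3
  rw [mul_rightConj_pow hzi (cyclic_rel_of_cube hcube hzi) hn, h,
    rightConj_eq_self (hzx.pow_left _), ← pow_add, ← mul_two, ← pow_succ]
  rw [h, rightConj_commSeq]
  exact (hzi.mul_right (commute_commSeq hzx hzi 1)).pow_left _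

namespace IsGQ

theorem commSeq_eq_one (h : IsGQ m 1 k x y) : commSeq x y (m + 5) = 1 := by
  have hz := h.x_cube
  rw [pow_one] at hz
  rw [commSeq, ← hz, fcomm_eq_one_iff]
  exact (Commute.refl x).pow_left 3

theorem x_cube_cube (h : IsGQ m 1 k x y) : (x ^ 3) ^ 3 = 1 := by
  have hz := h.x_cube
  rw [pow_one] at hz
  exact cube_cube_eq_one (g := commSeq x y (m + 2)) hz.symm (hz ▸ h.top)

theorem cube_succ (h : IsGQ m 1 k x y) {i : ℕ} (hi : i ≤ m + 1) :
    commSeq x y (i + 1) ^ 3 = commSeq x y (i + 3) ^ 2 * commSeq x y (i + 4) := by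
  rcases hi.lt_or_eq with hi | rfl
  · exact h.cube i (Nat.le_of_lt_succ hi)
  · rw [h.commSeq_eq_one, mul_one, h.top]

theorem commSeq_pow (h : IsGQ m 1 k x y) {l i : ℕ} (hi : i + 2 * l = m + 1) :
    commSeq x y (i + 1) ^ 3 ^ (l + 1) = (x ^ 3) ^ 2 ^ (l + 1) := by
  induction l generalizing i with
  | zero =>
    obtain rfl : i = m + 1 := hi
    rw [h.x_cube, zero_add, pow_one, pow_one, pow_one, h.top]
  | succ l ih =>
    rw [pow_succ', pow_mul, cube_eq_mul_rightConj (h.cube_succ (by omega))]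
    exact mul_rightConj_pow_eq h.x_cube_cube (h.cube_succ (by omega)) (Odd.pow (by decide))
      (ih (by omega))

theorem commute_x_cube_of_even (h : IsGQ m 1 k x y) (hm : Even m) : Commute (x ^ 3) y := by
  obtain ⟨l, rfl⟩ := hm
  have ha := h.commSeq_pow (l := l) (i := 1) (by omega)
  have hza : Commute (x ^ 3) (commSeq x y 2) := commute_of_pow_eq_pow_two_pow h.x_cube_cube ha
  have hprod := mul_rightConj_pow_eq h.x_cube_cube (h.cube_succ (by omega)) (Odd.pow (by decide)) ha
  have hzsq : Commute (x ^ 3) (commSeq x y 2 ^ 2) := hza.pow_right 2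
  have hzprod : Commute (x ^ 3) (commSeq x y 2 * rightConj x (commSeq x y 2)) := by
    rw [rightConj_commSeq]
    exact hza.mul_right (hza.mul_right (commute_commSeq ((Commute.refl x).pow_left 3) hza 1))
  have hk : ((x ^ 3) ^ k) ^ 3 ^ (l + 1) = 1 := by
    rw [pow_right_comm, pow_succ' 3, pow_mul, h.x_cube_cube, one_pow, one_pow]
  have hy : y ^ 3 = (x ^ 3) ^ k *
      rightConj (commSeq x y 2 ^ 2) (commSeq x y 2 * rightConj x (commSeq x y 2)) := by
    rw [h.y_cube, h.x_cube, pow_one, rightConj_apply, rightConj_commSeq]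
    simp [pow_two, mul_assoc]
  have hpow : y ^ (3 * 3 ^ (l + 1)) = (x ^ 3) ^ 2 ^ (l + 2) := by
    rw [pow_mul, hy, Commute.mul_pow, hk, one_mul, ← map_pow, hprod,
      rightConj_eq_self (hzsq.pow_left _)]
    rw [rightConj_apply]
    exact ((hzsq.inv_right.mul_right hzprod).mul_right hzsq).pow_left k
  exact commute_of_pow_eq_pow_two_pow h.x_cube_cube hpow

theorem commute_x_cube (h : IsGQ m e k x y) (he : e ≤ 1) (hm : Even m) : Commute (x ^ 3) y := by
  interval_cases e
  · rw [h.x_cube, pow_zero]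
    exact Commute.one_left y
  · exact h.commute_x_cube_of_even hm

end IsGQ

end CentralCube

section Abelian

variable {G : Type*} [Group G] {x y : G} {m e k : ℕ}

theorem commute_sq_rightConj {i : ℕ} (hx : Commute (x ^ 3) y)
    (hcube : commSeq x y (i + 1) ^ 3 = commSeq x y (i + 3) ^ 2 * commSeq x y (i + 4)) :
    Commute (commSeq x y (i + 1) ^ 2) (rightConj x (commSeq x y (i + 1))) :=
  commute_sq_of_mul_sq_mul (commSeq_succ_norm (commute_pow_commSeq hx i))
    (cyclic_rel_of_cube hcube (commute_pow_commSeq hx _))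

theorem commute_rightConj_of_succ {i : ℕ} (hx : Commute (x ^ 3) y)
    (hcube : commSeq x y (i + 1) ^ 3 = commSeq x y (i + 3) ^ 2 * commSeq x y (i + 4))
    (h : Commute (commSeq x y (i + 2)) (rightConj x (commSeq x y (i + 2)))) :
    Commute (commSeq x y (i + 1)) (rightConj x (commSeq x y (i + 1))) := by
  rw [commSeq_succ x y (i + 1), map_mul, map_inv] at h
  refine commute_of_commute_inv_mul (commSeq_succ_norm (commute_pow_commSeq hx i)) ?_ h
  simpa using (commute_sq_rightConj hx hcube).map (rightConj x)

theorem commute_rightConj_of_cube {i : ℕ} (hx : Commute (x ^ 3) y)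
    (hcube : commSeq x y (i + 1) ^ 3 = commSeq x y (i + 3) ^ 2 * commSeq x y (i + 4))
    (htop : commSeq x y (i + 2) ^ 3 = commSeq x y (i + 4) ^ 2) :
    Commute (commSeq x y (i + 1)) (rightConj x (commSeq x y (i + 1))) := by
  have hfix := rightConj_rightConj_rightConj (commute_pow_commSeq hx (i + 1))
  have hab := commute_sq_rightConj hx hcube
  have hbc := hab.map (rightConj x)
  have hca := hbc.map (rightConj x)
  have hnorm := commSeq_succ_norm (commute_pow_commSeq hx i)
  simp only [map_pow, hfix] at hbc hca
  refine commute_of_inv_mul_cube hnorm hab hbc hca ?_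
  have hthree : commSeq x y (i + 3) = (rightConj x (commSeq x y (i + 1)) ^ 3)⁻¹ := by
    rw [commSeq_succ x y (i + 2), commSeq_succ x y (i + 1), map_mul, map_inv]
    exact inv_mul_inv_mul_eq_inv_cube hnorm hbc
  rw [← commSeq_succ, htop, commSeq_succ x y (i + 3), hthree]
  simp only [map_inv, map_pow, inv_inv]

theorem commute_commSeq_succ (hx : Commute (x ^ 3) y)
    (h : Commute (commSeq x y 1) (rightConj x (commSeq x y 1))) (i j : ℕ) :
    Commute (commSeq x y (i + 1)) (commSeq x y (j + 1)) := by
  let A := Subgroup.closure {commSeq x y 1, rightConj x (commSeq x y 1)}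
  have ha : commSeq x y 1 ∈ A := Subgroup.subset_closure (by simp)
  have hb : rightConj x (commSeq x y 1) ∈ A := Subgroup.subset_closure (by simp)
  have hstable : A ≤ A.comap (rightConj x : G →* G) := by
    rw [Subgroup.closure_le]
    rintro g (rfl | rfl)
    · exact hb
    · change rightConj x (rightConj x _) ∈ A
      rw [eq_inv_of_mul_eq_one_right (commSeq_succ_norm (n := 0) hx)]
      exact inv_mem (mul_mem ha hb)
  have hmem (n : ℕ) : commSeq x y (n + 1) ∈ A := by
    induction n with
    | zero => exact ha
    | succ n ih =>
      rw [commSeq_succ x y (n + 1)]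
      exact mul_mem (inv_mem ih) (hstable ih)
  have : IsMulCommutative A := by
    apply Subgroup.isMulCommutative_closure
    rintro g (rfl | rfl) g' (rfl | rfl)
    exacts [rfl, h, h.symm, rfl]
  exact setLike_mul_comm (hmem i) (hmem j)

theorem commSeq_norm_cubes (hx : Commute (x ^ 3) y)
    (h : Commute (commSeq x y 1) (rightConj x (commSeq x y 1))) (n : ℕ) :
    commSeq x y (n + 1) ^ 3 * commSeq x y (n + 2) ^ 3 * commSeq x y (n + 3) = 1 := by
  have hswap (t : G) := (commute_commSeq_succ hx h (n + 1) n).left_comm t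
  rw [← commSeq_succ_norm (commute_pow_commSeq hx n)]
  simp only [rightConj_commSeq, map_mul, pow_succ, pow_zero, one_mul, mul_assoc, hswap]

theorem commSeq_cube (hx : Commute (x ^ 3) y)
    (h : Commute (commSeq x y 1) (rightConj x (commSeq x y 1))) (n : ℕ) :
    commSeq x y (n + 1) ^ 3 = commSeq x y (n + 3) ^ 2 * commSeq x y (n + 4) := by
  have h₁ := commSeq_norm_cubes hx h n
  have h₂ := commSeq_norm_cubes hx h (n + 1)
  rw [mul_assoc, mul_eq_one_iff_eq_inv] at h₁ h₂
  rw [h₁, h₂, mul_inv_rev, inv_inv, pow_succ', mul_assoc, inv_mul_cancel_left]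

namespace IsGQ

theorem of_commSeq_eq_one (hx : Commute (x ^ 3) y)
    (h : Commute (commSeq x y 1) (rightConj x (commSeq x y 1))) (hm : commSeq x y (m + 5) = 1)
    (third : fcomm (commSeq x y 1) y ^ 3 = 1) (x_cube : x ^ 3 = commSeq x y (m + 4) ^ e)
    (y_cube : y ^ 3 = commSeq x y (m + 4) ^ k * commSeq x y 3 * commSeq x y 2 ^ 2) :
    IsGQ m e k x y where
  cube i _ := commSeq_cube hx h i
  top := by rw [commSeq_cube hx h (m + 1), hm, mul_one]
  third := third
  x_cube := x_cube
  y_cube := y_cube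

theorem commute_rightConj (h : IsGQ m e k x y) (hx : Commute (x ^ 3) y) :
    Commute (commSeq x y 1) (rightConj x (commSeq x y 1)) :=
  Nat.decreasingInduction
    (motive := fun i _ => Commute (commSeq x y (i + 1)) (rightConj x (commSeq x y (i + 1))))
    (fun i hi => commute_rightConj_of_succ hx (h.cube i hi.le))
    (commute_rightConj_of_cube hx (h.cube m le_rfl) h.top) (Nat.zero_le m)

theorem commSeq_commute (h : IsGQ m e k x y) (hx : Commute (x ^ 3) y) (i j : ℕ) :
    Commute (commSeq x y (i + 1)) (commSeq x y (j + 1)) :=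
  commute_commSeq_succ hx (h.commute_rightConj hx) i j

theorem commSeq_last (h : IsGQ m e k x y) (hx : Commute (x ^ 3) y) :
    commSeq x y (m + 5) = 1 := by
  have hlast := commSeq_cube hx (h.commute_rightConj hx) (m + 1)
  rwa [h.top, left_eq_mul] at hlast

end IsGQ

end Abelian

section CentralThird

variable {G : Type*} [Group G] {x y g : G} {m e k : ℕ}

theorem commute_mul_inv_of_mul_cube {a : G} (hya : Commute (y ^ 3) a)
    (hcube : (y * a) ^ 3 = y ^ 3 * a ^ 3) : Commute (y * a⁻¹ * y⁻¹ * a) (y * a⁻¹) := by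
  have hsq : a * y * (a * y) = y ^ 2 * a ^ 2 :=
    mul_left_cancel (a := y) <| mul_right_cancel (b := a) (by
      simpa [pow_succ, mul_assoc] using hcube)
  have hconj : a⁻¹ * (y * a⁻¹ * y⁻¹ * a) * a = y⁻¹ * (y * a⁻¹ * y⁻¹ * a) * y := by
    calc a⁻¹ * (y * a⁻¹ * y⁻¹ * a) * a = a⁻¹ * y * a⁻¹ * ((y ^ 3)⁻¹ * (y ^ 2 * a ^ 2)) := by
          simp [pow_succ, mul_assoc]
      _ = a⁻¹ * y * a⁻¹ * ((y ^ 3)⁻¹ * a) * (y * (a * y)) := by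
          rw [← hsq]; simp only [mul_assoc]
      _ = y⁻¹ * (y * a⁻¹ * y⁻¹ * a) * y := by
          rw [hya.inv_left.eq]; simp [pow_succ, mul_assoc]
  calc y * a⁻¹ * y⁻¹ * a * (y * a⁻¹) = y * (y⁻¹ * (y * a⁻¹ * y⁻¹ * a) * y) * a⁻¹ := by
        simp [mul_assoc]
    _ = y * a⁻¹ * (y * a⁻¹ * y⁻¹ * a) := by rw [← hconj]; simp [mul_assoc]

theorem commute_fcomm_fcomm (hda : Commute (fcomm (fcomm y x) x) (fcomm y x))
    (hdy : Commute (fcomm (fcomm y x) x) y) (hya : Commute (y ^ 3) (fcomm y x))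
    (hcube : (y * fcomm y x) ^ 3 = y ^ 3 * fcomm y x ^ 3) :
    Commute (fcomm (fcomm y x) y) x ∧ Commute (fcomm (fcomm y x) y) y := by
  have hφy : rightConj x y = y * fcomm y x := by
    rw [fcomm_eq_inv_mul_rightConj, mul_inv_cancel_left]
  have hφa : rightConj x (fcomm y x) = fcomm y x * fcomm (fcomm y x) x := by
    rw [fcomm_eq_inv_mul_rightConj (fcomm y x), mul_inv_cancel_left]
  generalize fcomm (fcomm y x) x = d at *
  generalize fcomm y x = a at *
  let τ := y * a⁻¹ * y⁻¹ * a
  have hφτ : rightConj x τ = τ := by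
    have hd : Commute d (a⁻¹ * a⁻¹ * y⁻¹ * a) :=
      ((hda.inv_right.mul_right hda.inv_right).mul_right hdy.inv_right).mul_right hda
    calc rightConj x τ = y * a * (d⁻¹ * (a⁻¹ * a⁻¹ * y⁻¹ * a * d)) := by
          simp only [τ, map_mul, map_inv, hφy, hφa, mul_inv_rev, mul_assoc]
      _ = τ := by rw [← hd.eq, inv_mul_cancel_left]; simp only [τ, mul_assoc, mul_inv_cancel_left]
  have hτy : y⁻¹ * τ * y = fcomm a y := by simp [τ, fcomm, mul_assoc]
  have hτya : Commute τ (y * a⁻¹) := commute_mul_inv_of_mul_cube hya hcube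
  have hτyd : Commute τ (y * d⁻¹) := by
    have := hτya.map (rightConj x)
    rwa [hφτ, map_mul, map_inv, hφy, hφa, mul_assoc, mul_inv_rev, ← mul_inv_rev, ← hda.eq,
      mul_inv_rev, mul_inv_cancel_left] at this
  have hτd : Commute d τ :=
    ((hdy.mul_right hda.inv_right).mul_right hdy.inv_right).mul_right hda
  have hτ : Commute τ y := by simpa using hτyd.mul_right hτd.symm
  have hτx : Commute τ x := by
    rwa [rightConj_apply, mul_assoc, inv_mul_eq_iff_eq_mul] at hφτ
  rw [← hτy, mul_assoc, hτ.eq, inv_mul_cancel_left]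
  exact ⟨hτx, hτ⟩

theorem commute_rightConj_of_commute (h : Commute y g)
    (ha : Commute (commSeq x y 1) (rightConj x g)) : Commute y (rightConj x g) := by
  have hya := h.map (rightConj x)
  rw [show rightConj x y = y * commSeq x y 1 from rightConj_commSeq x y 0] at hya
  simpa using hya.mul_left ha.inv_left

namespace IsGQ

theorem rightConj_last (h : IsGQ m e k x y) (hx : Commute (x ^ 3) y) :
    rightConj x (commSeq x y (m + 4)) = commSeq x y (m + 4) := by
  rw [rightConj_commSeq, h.commSeq_last hx, mul_one]

theorem rightConj_y_cube (h : IsGQ m e k x y) (hx : Commute (x ^ 3) y) :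
    rightConj x (y ^ 3) = commSeq x y (m + 4) ^ k * (commSeq x y 2)⁻¹ := by
  have hy : commSeq x y 3 * commSeq x y 2 ^ 2 = (rightConj x (rightConj x (commSeq x y 2)))⁻¹ := by
    rw [← eq_inv_of_mul_eq_one_left (commSeq_succ_norm (commute_pow_commSeq hx 1)),
      rightConj_commSeq, ((h.commSeq_commute hx 2 1).pow_right 2).eq, pow_two, mul_assoc]
  rw [h.y_cube, mul_assoc, hy, map_mul, map_pow, h.rightConj_last hx, map_inv,
    rightConj_rightConj_rightConj (commute_pow_commSeq hx 2)]

theorem commute_y (h : IsGQ m e k x y) (hx : Commute (x ^ 3) y) (n : ℕ) :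
    Commute y (commSeq x y (n + 2)) := by
  have hc := h.commSeq_commute hx
  have hz (i : ℕ) : Commute (commSeq x y (i + 1)) (commSeq x y (m + 4) ^ k) :=
    (hc i (m + 3)).pow_right k
  let v := commSeq x y (m + 4) ^ k * (commSeq x y 2)⁻¹
  have hv : Commute y v := by
    have hy : rightConj x (y ^ 3) = v := h.rightConj_y_cube hx
    rw [← hy]
    refine commute_rightConj_of_commute ((Commute.refl y).pow_right 3) ?_
    rw [hy]
    exact (hz 0).mul_right (hc 0 1).inv_right
  have hφv : rightConj x v = v * (commSeq x y 3)⁻¹ := by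
    rw [map_mul, map_pow, h.rightConj_last hx, map_inv, rightConj_commSeq, (hc 1 2).eq,
      mul_inv_rev, mul_assoc]
  have hthree : Commute y (commSeq x y 3) := by
    have hyφv : Commute y (rightConj x v) := by
      refine commute_rightConj_of_commute hv ?_
      rw [hφv]
      exact ((hz 0).mul_right (hc 0 1).inv_right).mul_right (hc 0 2).inv_right
    rw [hφv] at hyφv
    simpa using hv.inv_right.mul_right hyφv
  have hge (i : ℕ) : Commute y (commSeq x y (i + 3)) := by
    induction i with
    | zero => exact hthree
    | succ i ih =>
      have hφ : Commute y (rightConj x (commSeq x y (i + 3))) := by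
        refine commute_rightConj_of_commute ih ?_
        rw [rightConj_commSeq]
        exact (hc 0 (i + 2)).mul_right (hc 0 (i + 3))
      rw [commSeq_succ]
      exact ih.inv_right.mul_right hφ
  cases n with
  | zero => simpa [v] using ((hge (m + 1)).pow_right k).inv_right.mul_right hv
  | succ n => exact hge n

theorem commute_third (h : IsGQ m e k x y) (hx : Commute (x ^ 3) y) :
    Commute (fcomm (commSeq x y 1) y) x ∧ Commute (fcomm (commSeq x y 1) y) y := by
  have hc := h.commSeq_commute hx
  have hcube : (y * commSeq x y 1) ^ 3 = y ^ 3 * commSeq x y 1 ^ 3 := by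
    have hn := commSeq_norm_cubes hx (h.commute_rightConj hx) 0
    rw [mul_assoc, mul_eq_one_iff_eq_inv, zero_add] at hn
    have hφy : rightConj x y = y * commSeq x y 1 := rightConj_commSeq x y 0
    rw [← hφy, ← map_pow, h.rightConj_y_cube hx, h.y_cube, hn, mul_assoc, mul_assoc, mul_inv_rev,
      ← mul_assoc (commSeq x y 3), ((hc 2 1).pow_right 2).eq]
    simp [pow_succ, mul_assoc]
  have hya : Commute (y ^ 3) (commSeq x y 1) := by
    rw [h.y_cube]
    exact (((hc (m + 3) 0).pow_left k).mul_left (hc 2 0)).mul_left ((hc 1 0).pow_left 2)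
  exact commute_fcomm_fcomm (hc 1 0) (h.commute_y hx 0).symm hya hcube

end IsGQ

end CentralThird

section Inversion

variable {G : Type*} [Group G] {x y g : G} {m e k : ℕ}

theorem rightConj_mul (a b g : G) : rightConj (a * b) g = rightConj b (rightConj a g) := by
  simp only [rightConj_apply, mul_inv_rev, mul_assoc]

theorem rightConj_inv_rightConj (x g : G) : rightConj x⁻¹ (rightConj x g) = g := by
  rw [← rightConj_mul, mul_inv_cancel, rightConj_eq_self (Commute.one_right g)]

theorem commute_rightConj_inv_of_commute {u : G} (hx : Commute u x) (hg : Commute u g) :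
    Commute u (rightConj x⁻¹ g) := by
  rw [rightConj_apply, inv_inv]
  exact (hx.mul_right hg).mul_right hx.inv_right

theorem fcomm_fcomm_inv (x y : G) :
    fcomm (fcomm y⁻¹ x⁻¹) y⁻¹ = y * x * y * (fcomm (fcomm y x) y)⁻¹ * (y * x * y)⁻¹ := by
  simp [fcomm, mul_assoc]

theorem fcomm_inv_eq_rightConj (hx : Commute (fcomm (fcomm y x) y) x)
    (hy : Commute (fcomm (fcomm y x) y) y) :
    fcomm y⁻¹ x⁻¹ = rightConj x⁻¹ (fcomm y x) * (fcomm (fcomm y x) y)⁻¹ := by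
  have h : y * fcomm y x * y⁻¹ = fcomm y x * (fcomm (fcomm y x) y)⁻¹ := by
    rw [eq_mul_inv_iff_mul_eq, mul_assoc, ← hy.inv_right.eq]
    simp [fcomm, mul_assoc]
  calc fcomm y⁻¹ x⁻¹ = x * (y * fcomm y x * y⁻¹) * x⁻¹ := by simp [fcomm, mul_assoc]
    _ = rightConj x⁻¹ (fcomm y x) * (fcomm (fcomm y x) y)⁻¹ := by
      rw [h, rightConj_apply, mul_assoc, mul_assoc _ _ x⁻¹, hx.inv_inv.eq]
      simp only [inv_inv, mul_assoc]

theorem fcomm_mul_of_commute {u : G} (hg : Commute u g) (hx : Commute u x) :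
    fcomm (g * u) x = fcomm g x := by
  have : Commute u (fcomm g x) := commute_commSeq hx hg 1
  rw [fcomm_eq_inv_mul_rightConj, map_mul, rightConj_eq_self hx, mul_inv_rev, mul_assoc,
    ← mul_assoc g⁻¹, ← fcomm_eq_inv_mul_rightConj, ← this.eq, inv_mul_cancel_left]

theorem fcomm_rightConj_zpow (h : Commute g (rightConj x g)) (n : ℕ) (ε : ℤ) :
    fcomm (rightConj (x⁻¹ ^ n) (g ^ ε)) x⁻¹ = rightConj (x⁻¹ ^ (n + 1)) (fcomm g x ^ (-ε)) := by
  have hinv : fcomm (g ^ ε) x⁻¹ = rightConj x⁻¹ (fcomm g x ^ (-ε)) := by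
    rw [fcomm_eq_inv_mul_rightConj, fcomm_eq_inv_mul_rightConj, h.inv_left.mul_zpow, inv_zpow',
      neg_neg, (h.zpow_zpow ε (-ε)).eq, map_mul, ← map_zpow, rightConj_inv_rightConj, zpow_neg]
  have hx : rightConj (x⁻¹ ^ n) x⁻¹ = x⁻¹ := rightConj_eq_self ((Commute.refl x⁻¹).pow_right n)
  calc fcomm (rightConj (x⁻¹ ^ n) (g ^ ε)) x⁻¹ = rightConj (x⁻¹ ^ n) (fcomm (g ^ ε) x⁻¹) := by
        simpa only [MulEquiv.coe_toMonoidHom, hx] using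
          (map_fcomm (rightConj (x⁻¹ ^ n)).toMonoidHom (g ^ ε) x⁻¹).symm
    _ = rightConj (x⁻¹ ^ (n + 1)) (fcomm g x ^ (-ε)) := by
        rw [hinv, ← rightConj_mul, ← pow_succ']

namespace IsGQ

theorem commSeq_inv_one (h : IsGQ m e k x y) (hx : Commute (x ^ 3) y) :
    commSeq x⁻¹ y⁻¹ 1 = rightConj x⁻¹ (commSeq x y 1) * (fcomm (commSeq x y 1) y)⁻¹ :=
  fcomm_inv_eq_rightConj (h.commute_third hx).1 (h.commute_third hx).2

theorem commSeq_inv (h : IsGQ m e k x y) (hx : Commute (x ^ 3) y) (n : ℕ) :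
    commSeq x⁻¹ y⁻¹ (n + 2) =
      rightConj (x⁻¹ ^ (n + 2)) (commSeq x y (n + 2) ^ (-1 : ℤ) ^ (n + 1)) := by
  have hφ (n : ℕ) : Commute (commSeq x y (n + 1)) (rightConj x (commSeq x y (n + 1))) := by
    rw [rightConj_commSeq]
    exact (Commute.refl _).mul_right (h.commSeq_commute hx n (n + 1))
  induction n with
  | zero =>
    obtain ⟨htx, hty⟩ := h.commute_third hx
    have ht := (commute_rightConj_inv_of_commute htx (commute_commSeq htx hty 1)).inv_left
    have := fcomm_rightConj_zpow (hφ 0) 1 1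
    rw [commSeq, h.commSeq_inv_one hx, fcomm_mul_of_commute ht htx.inv_inv]
    simpa [commSeq] using this
  | succ n ih =>
    rw [commSeq, ih, fcomm_rightConj_zpow (hφ (n + 1)), pow_succ (-1 : ℤ) (n + 1), mul_neg_one]
    rfl

theorem commSeq_inv_two (h : IsGQ m e k x y) (hx : Commute (x ^ 3) y) :
    commSeq x⁻¹ y⁻¹ 2 = (commSeq x y 2 * commSeq x y 3)⁻¹ := by
  have hφ := rightConj_eq_self (commute_pow_commSeq hx 2).symm.inv_right
  have hφ' := rightConj_eq_self (commute_pow_commSeq hx 3).symm.inv_right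
  rw [← inv_pow] at hφ hφ'
  rw [h.commSeq_inv hx 0, ← rightConj_inv_rightConj x (commSeq x y (0 + 2) ^ _), ← rightConj_mul,
    ← pow_succ', map_zpow, rightConj_commSeq, map_zpow, map_mul, hφ, hφ']
  simp

theorem commSeq_inv_three (h : IsGQ m e k x y) (hx : Commute (x ^ 3) y) :
    commSeq x⁻¹ y⁻¹ 3 = commSeq x y 3 := by
  rw [h.commSeq_inv hx 1, map_zpow, inv_pow,
    rightConj_eq_self (commute_pow_commSeq hx 3).symm.inv_right]
  simp

theorem commSeq_inv_last (h : IsGQ m e k x y) (hx : Commute (x ^ 3) y) (hm : Even m) :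
    commSeq x⁻¹ y⁻¹ (m + 4) = (commSeq x y (m + 4))⁻¹ := by
  have hzx : Commute (commSeq x y (m + 4)) x := fcomm_eq_one_iff.mp (h.commSeq_last hx)
  rw [h.commSeq_inv hx (m + 2), (hm.add_odd (by decide : Odd 3)).neg_one_pow, zpow_neg_one,
    rightConj_eq_self (hzx.inv_inv.pow_right _)]

theorem commute_rightConj_inv (h : IsGQ m e k x y) (hx : Commute (x ^ 3) y) :
    Commute (commSeq x⁻¹ y⁻¹ 1) (rightConj x⁻¹ (commSeq x⁻¹ y⁻¹ 1)) := by
  obtain ⟨htx, hty⟩ := h.commute_third hx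
  have ht := commute_rightConj_inv_of_commute htx (commute_commSeq htx hty 1)
  have hψ := ((h.commute_rightConj hx).map (rightConj x⁻¹)).map (rightConj x⁻¹)
  rw [rightConj_inv_rightConj] at hψ
  rw [h.commSeq_inv_one hx, map_mul, map_inv, rightConj_eq_self htx.inv_right]
  exact (hψ.symm.mul_left (commute_rightConj_inv_of_commute htx ht).inv_left).mul_right
    (ht.symm.inv_right.mul_left (Commute.refl _))

theorem inv (h : IsGQ m e k x y) (hx : Commute (x ^ 3) y) (hm : Even m) : IsGQ m e k x⁻¹ y⁻¹ := by
  have hlast := h.commSeq_inv_last hx hm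
  refine of_commSeq_eq_one ?_ (h.commute_rightConj_inv hx) ?_ ?_ ?_ ?_
  · rw [inv_pow]
    exact hx.inv_inv
  · rw [h.commSeq_inv hx (m + 3), h.commSeq_last hx, one_zpow, map_one]
  · have hthird : fcomm (fcomm y x) y ^ 3 = 1 := h.third
    have hconj : fcomm (commSeq x⁻¹ y⁻¹ 1) y⁻¹ = _ := fcomm_fcomm_inv x y
    rw [hconj, conj_pow, inv_pow, hthird, inv_one, mul_one, mul_inv_cancel]
  · rw [hlast, inv_pow, h.x_cube, inv_pow]
  · have hc := h.commSeq_commute hx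
    have hz : Commute (commSeq x y (m + 4) ^ k) (commSeq x y 3 * commSeq x y 2 ^ 2) :=
      ((hc (m + 3) 2).mul_right ((hc (m + 3) 1).pow_right 2)).pow_left k
    have hsq : commSeq x y 3 * ((commSeq x y 2 * commSeq x y 3)⁻¹) ^ 2 =
        (commSeq x y 3 * commSeq x y 2 ^ 2)⁻¹ := by
      have h₃ : Commute (commSeq x y 3) (commSeq x y 3 * commSeq x y 2 ^ 2) :=
        (Commute.refl _).mul_right ((hc 2 1).pow_right 2)
      rw [(hc 1 2).eq, inv_pow, (hc 2 1).mul_pow, pow_two (commSeq x y 3), mul_assoc, mul_inv_rev,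
        ← mul_assoc, h₃.inv_right.eq, mul_inv_cancel_right]
    rw [hlast, h.commSeq_inv_two hx, h.commSeq_inv_three hx, inv_pow, h.y_cube, mul_assoc,
      hz.mul_inv, mul_assoc, hsq, inv_pow]

end IsGQ

end Inversion

section Presentation

variable {H : Type*} [Group H] {m e k : ℕ} {x y : H}

theorem exists_of_mem_RxSet {c : ℕ} {Rx : FreeGroup ℕ} (h : Rx ∈ RxSet c) :
    ∃ e ≤ 1, Rx = xw ^ 3 * (sw c ^ e)⁻¹ := by
  rcases h with rfl | rfl
  · exact ⟨0, by simp⟩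
  · exact ⟨1, by simp⟩

theorem exists_of_mem_RySet {c : ℕ} {Ry : FreeGroup ℕ} (h : Ry ∈ RySet c) :
    ∃ k, Ry = yw ^ 3 * (sw 3 ^ 2)⁻¹ * (sw 4)⁻¹ * (sw c ^ k)⁻¹ := by
  rcases h with rfl | rfl | rfl
  · exact ⟨0, by simp⟩
  · exact ⟨1, by simp⟩
  · exact ⟨2, rfl⟩

/-- The relators of `G_Q(c, R_x, R_y)` for `c = m + 5`, where `R_x` and `R_y` contain `s_c` with
exponents `-e` and `-k`; these are the relations collected in `IsGQ m e k`. -/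
abbrev relators (m e k : ℕ) : Set (FreeGroup ℕ) :=
  rels (m + 5) (xw ^ 3 * (sw (m + 5) ^ e)⁻¹)
    (yw ^ 3 * (sw 3 ^ 2)⁻¹ * (sw 4)⁻¹ * (sw (m + 5) ^ k)⁻¹)

/-- The values of the generators `x, y, t₃, s₂, …, s_c` forced by the values of `x` and `y`; the
remaining generators go to `1`. -/
def genMap (c : ℕ) (x y : H) : ℕ → H
  | 0 => x
  | 1 => y
  | 2 => fcomm (commSeq x y 1) y
  | j + 3 => if j + 2 ≤ c then commSeq x y (j + 1) else 1

theorem genMap_add_three {c j : ℕ} (x y : H) (hj : j + 2 ≤ c) :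
    genMap c x y (j + 3) = commSeq x y (j + 1) :=
  if_pos hj

theorem map_of_eq_genMap {c : ℕ} {Rx Ry : FreeGroup ℕ} (hc : 2 ≤ c) (f : FreeGroup ℕ →* H)
    (hf : ∀ w ∈ rels c Rx Ry, f w = 1) (n : ℕ) :
    f (.of n) = genMap c (f xw) (f yw) n := by
  have hs (j : ℕ) (hj : j + 2 ≤ c) : f (sw (j + 2)) = commSeq (f xw) (f yw) (j + 1) := by
    induction j with
    | zero =>
      have := hf (sw 2 * (fcomm yw xw)⁻¹) (by simp [rels])
      rwa [map_mul, map_inv, map_fcomm, mul_inv_eq_one] at this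
    | succ j ih =>
      have := hf (sw (j + 3) * (fcomm (sw (j + 2)) xw)⁻¹)
        (.inl (.inl (.inr ⟨j + 3, by omega, by omega, rfl⟩)))
      rwa [map_mul, map_inv, map_fcomm, mul_inv_eq_one, ih (by omega)] at this
  match n with
  | 0 => rfl
  | 1 => rfl
  | 2 =>
    have := hf (t3w * (fcomm (sw 2) yw)⁻¹) (by simp [rels])
    rwa [map_mul, map_inv, map_fcomm, mul_inv_eq_one, hs 0 hc] at this
  | j + 3 =>
    rw [genMap]
    split_ifs with hj
    · exact hs j hj
    · exact hf _ (.inr ⟨j + 3, by omega, rfl⟩)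

theorem IsGQ.lift_eq_one (h : IsGQ m e k x y) :
    ∀ w ∈ relators m e k, FreeGroup.lift (genMap (m + 5) x y) w = 1 := by
  have hx : FreeGroup.lift (genMap (m + 5) x y) xw = x := FreeGroup.lift_apply_of
  have hy : FreeGroup.lift (genMap (m + 5) x y) yw = y := FreeGroup.lift_apply_of
  have ht : FreeGroup.lift (genMap (m + 5) x y) t3w = fcomm (commSeq x y 1) y :=
    FreeGroup.lift_apply_of
  have hs (j : ℕ) (hj : j ≤ m + 3) :
      FreeGroup.lift (genMap (m + 5) x y) (sw (j + 2)) = commSeq x y (j + 1) :=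
    FreeGroup.lift_apply_of.trans (genMap_add_three x y (by omega))
  rintro w ((((rfl | rfl | rfl | rfl | rfl | rfl) | ⟨j, h3, hj, rfl⟩) | ⟨j, h2, hj, rfl⟩) |
    ⟨n, hn, rfl⟩)
  · rw [map_mul, map_inv, map_fcomm, hx, hy, hs 0 (by omega), mul_inv_eq_one]
    rfl
  · rw [map_mul, map_inv, map_fcomm, ht, hy, hs 0 (by omega), mul_inv_eq_one]
  · rw [map_pow, ht, h.third]
  · rw [map_mul, map_inv, map_pow, map_pow, hs (m + 3) le_rfl,
      show m + 5 - 2 = m + 1 + 2 by omega, hs (m + 1) (by omega), mul_inv_eq_one, h.top]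
  · rw [map_mul, map_inv, map_pow, map_pow, hs (m + 3) le_rfl, hx, mul_inv_eq_one, h.x_cube]
  · simp only [map_mul, map_inv, map_pow]
    rw [hs (m + 3) le_rfl, hs 1 (by omega), hs 2 (by omega), hy, mul_inv_eq_one,
      mul_inv_eq_iff_eq_mul, mul_inv_eq_iff_eq_mul, h.y_cube]
  · obtain ⟨i, rfl⟩ := Nat.exists_eq_add_of_le' h3
    rw [map_mul, map_inv, map_fcomm, hx, hs (i + 1) (by omega),
      show i + 3 - 1 = i + 2 by omega, hs i (by omega), mul_inv_eq_one]
    rfl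
  · obtain ⟨i, rfl⟩ := Nat.exists_eq_add_of_le' h2
    rw [map_mul, map_inv, map_mul, map_pow, map_pow, hs i (by omega), hs (i + 2) (by omega),
      hs (i + 3) (by omega), mul_inv_eq_one, h.cube i (by omega)]
  · obtain ⟨i, rfl⟩ := Nat.exists_eq_add_of_le' (show 3 ≤ n by omega)
    exact FreeGroup.lift_apply_of.trans (if_neg (by omega))

theorem IsGQ.of_map_eq_one (f : FreeGroup ℕ →* H) (hf : ∀ w ∈ relators m e k, f w = 1) :
    IsGQ m e k (f xw) (f yw) := by
  have hs (j : ℕ) (hj : j ≤ m + 3) : f (sw (j + 2)) = commSeq (f xw) (f yw) (j + 1) :=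
    (map_of_eq_genMap (by omega) f hf _).trans (genMap_add_three _ _ (by omega))
  have ht : f t3w = fcomm (commSeq (f xw) (f yw) 1) (f yw) :=
    map_of_eq_genMap (by omega) f hf 2
  constructor
  · intro i hi
    have := hf (sw (i + 2) ^ 3 * (sw (i + 4) ^ 2 * sw (i + 5))⁻¹)
      (.inl (.inr ⟨i + 2, by omega, by omega, rfl⟩))
    rwa [map_mul, map_inv, map_mul, map_pow, map_pow, hs i (by omega), hs (i + 2) (by omega),
      hs (i + 3) (by omega), mul_inv_eq_one] at this
  · have := hf (sw (m + 3) ^ 3 * (sw (m + 5) ^ 2)⁻¹) (by simp [rels])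
    rwa [map_mul, map_inv, map_pow, map_pow, hs (m + 3) le_rfl, hs (m + 1) (by omega),
      mul_inv_eq_one] at this
  · have := hf (t3w ^ 3) (by simp [rels])
    rwa [map_pow, ht] at this
  · have := hf (xw ^ 3 * (sw (m + 5) ^ e)⁻¹) (by simp [rels])
    rwa [map_mul, map_inv, map_pow, map_pow, hs (m + 3) le_rfl, mul_inv_eq_one] at this
  · have := hf (yw ^ 3 * (sw 3 ^ 2)⁻¹ * (sw 4)⁻¹ * (sw (m + 5) ^ k)⁻¹) (by simp [rels])
    simp only [map_mul, map_inv, map_pow] at this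
    rwa [hs (m + 3) le_rfl, hs 1 (by omega), hs 2 (by omega), mul_inv_eq_one,
      mul_inv_eq_iff_eq_mul, mul_inv_eq_iff_eq_mul] at this

theorem isGQ_generators :
    IsGQ m e k (PresentedGroup.of (rels := relators m e k) 0) (PresentedGroup.of 1) :=
  .of_map_eq_one (PresentedGroup.mk _) fun _ => PresentedGroup.one_of_mem

theorem hom_ext_generators {f g : PresentedGroup (relators m e k) →* H}
    (h₀ : f (.of 0) = g (.of 0)) (h₁ : f (.of 1) = g (.of 1)) : f = g := by
  have hof (f : PresentedGroup (relators m e k) →* H) (n : ℕ) :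
      f (.of n) = genMap (m + 5) (f (.of 0)) (f (.of 1)) n :=
    map_of_eq_genMap (by omega) (f.comp (PresentedGroup.mk _))
      (fun w hw => by rw [MonoidHom.comp_apply, PresentedGroup.one_of_mem hw, map_one]) n
  ext n
  rw [hof f, hof g, h₀, h₁]

/-- The homomorphism from `G_Q(c, R_x, R_y)` given by two elements satisfying its relations. -/
def IsGQ.lift (h : IsGQ m e k x y) : PresentedGroup (relators m e k) →* H :=
  PresentedGroup.toGroup h.lift_eq_one

theorem IsGQ.lift_of_zero (h : IsGQ m e k x y) : h.lift (.of 0) = x :=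
  PresentedGroup.toGroup.of h.lift_eq_one

theorem IsGQ.lift_of_one (h : IsGQ m e k x y) : h.lift (.of 1) = y :=
  PresentedGroup.toGroup.of h.lift_eq_one

end Presentation

section SigmaAutomorphism

variable {m e k : ℕ}

theorem IsGQ.of_cube_eq_one {H : Type*} [Group H] {x : H} (hx : x ^ 3 = 1) (m e k : ℕ) :
    IsGQ m e k x 1 := by
  have hs (n : ℕ) : commSeq x (1 : H) n = 1 := by
    induction n with
    | zero => rfl
    | succ n ih =>
      rw [commSeq, ih, fcomm_eq_one_iff]
      exact Commute.one_left x
  constructor <;> simp [hs, hx, fcomm]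

theorem inv_of_zero_ne_of_zero :
    (PresentedGroup.of 0 : PresentedGroup (relators m e k))⁻¹ ≠ .of 0 := by
  have hχ : IsGQ m e k (Multiplicative.ofAdd (1 : ZMod 3)) 1 := .of_cube_eq_one (by decide) m e k
  intro h
  have := congrArg hχ.lift h
  rw [map_inv, hχ.lift_of_zero] at this
  exact absurd this (by decide)

/-- The automorphism of `G_Q(c, R_x, R_y)` inverting the generators `x` and `y`. -/
def inversion (h : IsGQ m e k (PresentedGroup.of (rels := relators m e k) 0)⁻¹ (.of 1)⁻¹) :
    PresentedGroup (relators m e k) ≃* PresentedGroup (relators m e k) :=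
  have hσ : h.lift.comp h.lift = .id _ :=
    hom_ext_generators (by simp [h.lift_of_zero]) (by simp [h.lift_of_one])
  h.lift.toMulEquiv h.lift hσ hσ

variable (h : IsGQ m e k (PresentedGroup.of (rels := relators m e k) 0)⁻¹ (.of 1)⁻¹)

theorem inversion_inversion (g : PresentedGroup (relators m e k)) :
    inversion h (inversion h g) = g :=
  (inversion h).left_inv g

theorem inversion_ne_refl : inversion h ≠ .refl _ := fun hσ =>
  inv_of_zero_ne_of_zero (h.lift_of_zero.symm.trans (DFunLike.congr_fun hσ (.of 0)))

theorem inversion_mul_self_mem_commutator (g : PresentedGroup (relators m e k)) :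
    inversion h g * g ∈ commutator (PresentedGroup (relators m e k)) := by
  have hab : Abelianization.of.comp h.lift * Abelianization.of = 1 :=
    hom_ext_generators (by simp [h.lift_of_zero]) (by simp [h.lift_of_one])
  rw [← Abelianization.ker_of, MonoidHom.mem_ker, map_mul]
  exact DFunLike.congr_fun hab g

end SigmaAutomorphism

theorem GQ_has_sigma_automorphism (c : ℕ) (hc : 5 ≤ c) (hodd : Odd c)
    (Rx : FreeGroup ℕ) (hRx : Rx ∈ RxSet c)
    (Ry : FreeGroup ℕ) (hRy : Ry ∈ RySet c) :
    ∃ σ : GQ c Rx Ry ≃* GQ c Rx Ry,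
      (∀ g, σ (σ g) = g) ∧
      σ ≠ MulEquiv.refl (GQ c Rx Ry) ∧
      ∀ g : GQ c Rx Ry, σ g * g ∈
        Subgroup.closure {w : GQ c Rx Ry |
          (∃ h : GQ c Rx Ry, h ^ 3 = w) ∨ w ∈ commutator (GQ c Rx Ry)} := by
  obtain ⟨m, rfl⟩ := Nat.exists_eq_add_of_le' hc
  have hm : Even m := (Nat.odd_add'.mp hodd).mp (by decide)
  obtain ⟨e, he, rfl⟩ := exists_of_mem_RxSet hRx
  obtain ⟨k, rfl⟩ := exists_of_mem_RySet hRy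
  have hG : IsGQ m e k (PresentedGroup.of (rels := relators m e k) 0) (.of 1) :=
    isGQ_generators
  have hinv := hG.inv (hG.commute_x_cube he hm) hm
  exact ⟨inversion hinv, inversion_inversion hinv, inversion_ne_refl hinv, fun g =>
    Subgroup.subset_closure (.inr (inversion_mul_self_mem_commutator hinv g))⟩
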